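/- Let K ≥ 2 be an even integer, let G be a finite simple bipartite graph in which every vertex has degree exactly 2, let M be a matching in G having no augmenting paths of length ≤ 2K+1, and let v and v' be two distinct vertices not covered by M. Then X_l(v) and X_l(v') are disjoint for every l with 0 ≤ l ≤ K. -/

import Mathlib

/-- A vertex `v` is covered by a set `M` of edges if it lies on some edge of `M`. -/
def coveredBy {V : Type*} (M : Set (Sym2 V)) (v : V) : Prop := ∃ e ∈ M, v ∈ e

/-- `M` is a matching in `G`: a set of edges of `G`, no two of which share a vertex. -/
def isMatching {V : Type*} (G : SimpleGraph V) (M : Set (Sym2 V)) : Prop :=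
  M ⊆ G.edgeSet ∧ ∀ e ∈ M, ∀ f ∈ M, e ≠ f → ∀ v : V, ¬(v ∈ e ∧ v ∈ f)

/-- `p 0, p 1, …, p l` is an `M`-augmenting path of length `l` in `G`:
a path whose endpoints are not covered by `M`, whose edges alternate outside/inside `M`,
beginning and ending with edges outside `M` (so `l` is odd). -/
def isAugPath {V : Type*} (G : SimpleGraph V) (M : Set (Sym2 V)) (p : ℕ → V) (l : ℕ) : Prop :=
  Odd l ∧ (∀ i < l, G.Adj (p i) (p (i+1))) ∧
  (∀ i ≤ l, ∀ j ≤ l, p i = p j → i = j) ∧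
  ¬ coveredBy M (p 0) ∧ ¬ coveredBy M (p l) ∧
  ∀ i < l, (s(p i, p (i+1)) ∈ M ↔ Odd i)

/-- `G` is bipartite: the vertices can be split into a set `A` and its complement so that
every edge has one endpoint in `A` and the other outside `A`. -/
def isBipartite {V : Type*} (G : SimpleGraph V) : Prop :=
  ∃ A : Set V, ∀ v w : V, G.Adj v w → (v ∈ A ↔ w ∉ A)

/-- `N_G(S)`: vertices adjacent in `G` to some vertex of `S`. -/
def NG {V : Type*} (G : SimpleGraph V) (S : Set V) : Set V := {w | ∃ v ∈ S, G.Adj v w}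

/-- `N_M(S)`: vertices joined by an edge of `M` to some vertex of `S`. -/
def NM {V : Type*} (M : Set (Sym2 V)) (S : Set V) : Set V := {w | ∃ v ∈ S, s(v, w) ∈ M}

/-- `Yseq G M S` : `Y_0 = S`, `Y_{2k+1} = N_G(Y_{2k})`, `Y_{2k+2} = N_M(Y_{2k+1})`. -/
def Yseq {V : Type*} (G : SimpleGraph V) (M : Set (Sym2 V)) (S : Set V) : ℕ → Set V
  | 0 => S
  | (l+1) => if Even l then NG G (Yseq G M S l) else NM M (Yseq G M S l)

/-- `Wseq G M x` : `W_0 = {x}`, `W_{2k+1} = N_M(W_{2k})`, `W_{2k+2} = N_G(W_{2k+1})`. -/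
def Wseq {V : Type*} (G : SimpleGraph V) (M : Set (Sym2 V)) (x : V) : ℕ → Set V
  | 0 => {x}
  | (l+1) => if Even l then NM M (Wseq G M x l) else NG G (Wseq G M x l)

/-- The set of edges of the path `p 0, …, p l`. -/
def pathEdges {V : Type*} (p : ℕ → V) (l : ℕ) : Set (Sym2 V) :=
  {e | ∃ i < l, e = s(p i, p (i+1))}

/-!
Let `S`, `S'` be disjoint sets of uncovered vertices. Suppose `x` lies in an even layer of `S` and
in an even layer of `S'`, both of positive index. Its mate `a` then has a neighbour `b` in the
preceding even layer of `S` and a neighbour `b'` in that of `S'`. Since `a` has at most two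
neighbours, two of `b`, `b'`, `x` coincide, and each coincidence gives a common vertex of even
layers with smaller total index. Layers of positive even index consist of covered vertices, so
the descent ends in a contradiction: no even layer of `S` meets an even layer of `S'`.

If odd layers of the same index share a covered vertex, its mate lies in the two following even
layers. If they share an uncovered vertex `x`, then one of the two sets contains the origin `v ≠ x`
of an alternating walk to `x`. An alternating walk never backtracks, and in a graph of maximum
degree at most two a walk that neither backtracks nor returns to its origin is a path. So this walk
is a short augmenting path.
-/

theorem eq_or_eq_or_eq_of_encard_le_two {α : Type*} {s : Set α} (hs : s.encard ≤ 2) {a b c : α}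
    (ha : a ∈ s) (hb : b ∈ s) (hc : c ∈ s) : a = b ∨ a = c ∨ b = c := by
  by_contra! hne
  have hthree : ({a, b, c} : Set α).encard = 3 :=
    Set.encard_eq_three.2 ⟨a, b, c, hne.1, hne.2.1, hne.2.2, rfl⟩
  have hsub : {a, b, c} ⊆ s := by
    simp only [Set.insert_subset_iff, Set.singleton_subset_iff]
    exact ⟨ha, hb, hc⟩
  exact absurd (hthree ▸ (Set.encard_le_encard hsub).trans hs) (by norm_num)

section

variable {V : Type*} {G : SimpleGraph V} {M : Set (Sym2 V)} {S S' : Set V} {p : ℕ → V} {l : ℕ}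

theorem injOn_Iic_of_encard_neighborSet_le_two (hdeg : ∀ v, (G.neighborSet v).encard ≤ 2)
    (hadj : ∀ i < l, G.Adj (p i) (p (i + 1))) (hback : ∀ i, i + 2 ≤ l → p i ≠ p (i + 2))
    (hstart : ∀ i, 0 < i → i ≤ l → p i ≠ p 0) : Set.InjOn p (Set.Iic l) := by
  have hne : ∀ j ≤ l, ∀ i < j, p i ≠ p j := by
    intro j
    induction j with
    | zero => intro _ i hi; omega
    | succ j ih =>
      rintro hj (_ | i) hij heq
      · exact hstart (j + 1) hij hj heq.symm
      have hprev : G.Adj (p (i + 1)) (p i) := (hadj i (by omega)).symm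
      have hnext : G.Adj (p (i + 1)) (p (i + 2)) := hadj (i + 1) (by omega)
      have hlast : G.Adj (p (i + 1)) (p j) := heq ▸ (hadj j hj).symm
      rcases eq_or_eq_or_eq_of_encard_le_two (hdeg _) hprev hnext hlast with h | h | h
      · exact hback i (by omega) h
      · exact ih (by omega) i (by omega) h
      · obtain rfl | rfl | hlt : j = i + 1 ∨ j = i + 2 ∨ i + 2 < j := by omega
        · exact hlast.ne rfl
        · exact hback (i + 1) hj heq
        · exact ih (by omega) (i + 2) hlt h
  intro i hi j hj heq
  rcases lt_trichotomy i j with hij | hij | hij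
  · exact absurd heq (hne j hj i hij)
  · exact hij
  · exact absurd heq.symm (hne i hi j hij)

theorem isMatching.eq_of_mem (hM : isMatching G M) {a x y : V} (hx : s(a, x) ∈ M)
    (hy : s(a, y) ∈ M) : x = y := by
  by_contra hne
  exact hM.2 _ hx _ hy (fun h => hne (Sym2.congr_right.1 h)) a
    ⟨Sym2.mem_mk_left a x, Sym2.mem_mk_left a y⟩

theorem coveredBy_left_of_mem {x y : V} (h : s(x, y) ∈ M) : coveredBy M x :=
  ⟨_, h, Sym2.mem_mk_left x y⟩

theorem coveredBy_right_of_mem {x y : V} (h : s(x, y) ∈ M) : coveredBy M y :=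
  ⟨_, h, Sym2.mem_mk_right x y⟩

/-- The sequence `p 0, …, p l` is an alternating walk of length `l`: its edges lie alternately
outside and inside `M`, beginning outside. As in `isAugPath`, values of `p` beyond `l` are
irrelevant; unlike there, vertices may repeat. -/
structure IsAltWalk (G : SimpleGraph V) (M : Set (Sym2 V)) (p : ℕ → V) (l : ℕ) : Prop where
  adj : ∀ i < l, G.Adj (p i) (p (i + 1))
  mem_iff_odd : ∀ i < l, (s(p i, p (i + 1)) ∈ M ↔ Odd i)

namespace IsAltWalk

theorem snoc (h : IsAltWalk G M p l) {a : V} (ha : G.Adj (p l) a) (haM : s(p l, a) ∈ M ↔ Odd l) :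
    IsAltWalk G M (Function.update p (l + 1) a) (l + 1) := by
  have hupd : ∀ i ≤ l, Function.update p (l + 1) a i = p i := fun i hi =>
    Function.update_of_ne (by omega) _ _
  constructor <;> intro i hi <;> rw [hupd i (by omega)] <;>
    obtain hlt | rfl : i < l ∨ i = l := by omega
  · rw [hupd _ hlt]
    exact h.adj i hlt
  · rwa [Function.update_self]
  · rw [hupd _ hlt]
    exact h.mem_iff_odd i hlt
  · rwa [Function.update_self]

theorem ne_add_two (h : IsAltWalk G M p l) {i : ℕ} (hi : i + 2 ≤ l) : p i ≠ p (i + 2) := by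
  intro heq
  have hfst := h.mem_iff_odd i (by omega)
  have hsnd := h.mem_iff_odd (i + 1) (by omega)
  rw [← heq, Sym2.eq_swap, hfst, Nat.odd_add_one] at hsnd
  exact iff_not_self hsnd

theorem coveredBy_of_pos_of_lt (h : IsAltWalk G M p l) {i : ℕ} (hpos : 0 < i) (hlt : i < l) :
    coveredBy M (p i) := by
  obtain ⟨i, rfl⟩ := Nat.exists_eq_add_one.2 hpos
  rcases Nat.even_or_odd i with hi | hi
  · exact coveredBy_left_of_mem ((h.mem_iff_odd (i + 1) hlt).2 hi.add_one)
  · exact coveredBy_right_of_mem ((h.mem_iff_odd i (by omega)).2 hi)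

theorem isAugPath (h : IsAltWalk G M p l) (hdeg : ∀ v, (G.neighborSet v).encard ≤ 2) (hl : Odd l)
    (hstart : ¬ coveredBy M (p 0)) (hend : ¬ coveredBy M (p l)) (hne : p 0 ≠ p l) :
    isAugPath G M p l := by
  have hreturn : ∀ i, 0 < i → i ≤ l → p i ≠ p 0 := by
    intro i hpos hi heq
    rcases hi.lt_or_eq with hlt | rfl
    · exact hstart (heq ▸ h.coveredBy_of_pos_of_lt hpos hlt)
    · exact hne heq.symm
  have hinj : Set.InjOn p (Set.Iic l) :=
    injOn_Iic_of_encard_neighborSet_le_two hdeg h.adj (fun _ => h.ne_add_two) hreturn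
  exact ⟨hl, h.adj, fun _ hi _ hj => hinj hi hj, hstart, hend, h.mem_iff_odd⟩

end IsAltWalk

theorem Yseq_two_mul_add_one (k : ℕ) :
    Yseq G M S (2 * k + 1) = NG G (Yseq G M S (2 * k)) :=
  if_pos (even_two_mul k)

theorem Yseq_two_mul_succ (k : ℕ) :
    Yseq G M S (2 * (k + 1)) = NM M (Yseq G M S (2 * k + 1)) :=
  if_neg (Nat.not_even_two_mul_add_one k)

theorem exists_adj_of_mem_Yseq_two_mul_succ {k : ℕ} {x : V} (hx : x ∈ Yseq G M S (2 * (k + 1))) :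
    ∃ b ∈ Yseq G M S (2 * k), ∃ a, G.Adj b a ∧ s(a, x) ∈ M := by
  rw [Yseq_two_mul_succ, Yseq_two_mul_add_one] at hx
  obtain ⟨a, ⟨b, hb, hba⟩, hax⟩ := hx
  exact ⟨b, hb, a, hba, hax⟩

theorem coveredBy_of_mem_Yseq_two_mul_succ {k : ℕ} {x : V} (hx : x ∈ Yseq G M S (2 * (k + 1))) :
    coveredBy M x := by
  obtain ⟨_, -, _, -, hax⟩ := exists_adj_of_mem_Yseq_two_mul_succ hx
  exact coveredBy_right_of_mem hax

theorem disjoint_Yseq_two_mul (hdeg : ∀ v, (G.neighborSet v).encard ≤ 2) (hM : isMatching G M)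
    (hSS' : Disjoint S S') (hS : ∀ v ∈ S, ¬ coveredBy M v) (hS' : ∀ v ∈ S', ¬ coveredBy M v)
    (j k : ℕ) : Disjoint (Yseq G M S (2 * j)) (Yseq G M S' (2 * k)) := by
  induction j generalizing k with
  | zero =>
    cases k with
    | zero => exact hSS'
    | succ k =>
      exact Set.disjoint_left.2 fun x hx hx' => hS x hx (coveredBy_of_mem_Yseq_two_mul_succ hx')
  | succ j ihj =>
    induction k with
    | zero =>
      exact Set.disjoint_left.2 fun x hx hx' => hS' x hx' (coveredBy_of_mem_Yseq_two_mul_succ hx)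
    | succ k ihk =>
      refine Set.disjoint_left.2 fun x hx hx' => ?_
      obtain ⟨b, hb, a, hba, hax⟩ := exists_adj_of_mem_Yseq_two_mul_succ hx
      obtain ⟨b', hb', a', hba', hax'⟩ := exists_adj_of_mem_Yseq_two_mul_succ hx'
      obtain rfl : a = a' := hM.eq_of_mem (Sym2.eq_swap ▸ hax) (Sym2.eq_swap ▸ hax')
      have hadj : G.Adj a x := hM.1 hax
      rcases eq_or_eq_or_eq_of_encard_le_two (hdeg a) hba.symm hba'.symm hadj with
        rfl | rfl | rfl
      · exact Set.disjoint_left.1 (ihj k) hb hb'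
      · exact Set.disjoint_left.1 (ihj (k + 1)) hb hx'
      · exact Set.disjoint_left.1 ihk hx hb'

theorem exists_isAltWalk_of_mem_Yseq_two_mul (hM : isMatching G M) {k : ℕ} {x : V}
    (hx : x ∈ Yseq G M S (2 * k)) :
    ∃ m ≤ k, ∃ p, IsAltWalk G M p (2 * m) ∧ p 0 ∈ S ∧ p (2 * m) = x := by
  induction k generalizing x with
  | zero => exact ⟨0, le_rfl, fun _ => x, ⟨by simp, by simp⟩, hx, rfl⟩
  | succ k ih =>
    obtain ⟨b, hb, a, hba, hax⟩ := exists_adj_of_mem_Yseq_two_mul_succ hx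
    obtain ⟨m, hm, p, hp, hstart, rfl⟩ := ih hb
    by_cases hbaM : s(p (2 * m), a) ∈ M
    · exact ⟨m, by omega, p, hp, hstart, hM.eq_of_mem (Sym2.eq_swap ▸ hbaM) hax⟩
    · have hwalk := (hp.snoc hba (by simp [hbaM])).snoc (a := x)
        (by simpa using hM.1 hax) (by simpa using hax)
      exact ⟨m + 1, by omega, _, hwalk, by simpa using hstart, Function.update_self ..⟩

theorem exists_isAltWalk_of_mem_Yseq_two_mul_add_one (hM : isMatching G M) {k : ℕ} {x : V}
    (hx : x ∈ Yseq G M S (2 * k + 1)) (hxM : ¬ coveredBy M x) :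
    ∃ m ≤ k, ∃ p, IsAltWalk G M p (2 * m + 1) ∧ p 0 ∈ S ∧ p (2 * m + 1) = x := by
  rw [Yseq_two_mul_add_one] at hx
  obtain ⟨b, hb, hbx⟩ := hx
  obtain ⟨m, hm, p, hp, hstart, rfl⟩ := exists_isAltWalk_of_mem_Yseq_two_mul hM hb
  have hbxM : s(p (2 * m), x) ∉ M := fun h => hxM (coveredBy_right_of_mem h)
  exact ⟨m, hm, _, hp.snoc hbx (by simp [hbxM]), by simpa using hstart, Function.update_self ..⟩

theorem exists_isAugPath_of_mem_Yseq (hdeg : ∀ v, (G.neighborSet v).encard ≤ 2)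
    (hM : isMatching G M) (hS : ∀ v ∈ S, ¬ coveredBy M v) {k : ℕ} {x : V} (hxS : x ∉ S)
    (hxM : ¬ coveredBy M x) (hx : x ∈ Yseq G M S (2 * k + 1)) :
    ∃ p, ∃ m ≤ 2 * k + 1, isAugPath G M p m := by
  obtain ⟨m, hm, p, hp, hstart, rfl⟩ := exists_isAltWalk_of_mem_Yseq_two_mul_add_one hM hx hxM
  exact ⟨p, 2 * m + 1, by omega, hp.isAugPath hdeg (odd_two_mul_add_one m) (hS _ hstart) hxM
    (ne_of_mem_of_not_mem hstart hxS)⟩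

theorem stmt6_general (hdeg : ∀ v, (G.neighborSet v).encard ≤ 2) (hM : isMatching G M)
    (hnoaug : ∀ p, ∀ m ≤ l, ¬ isAugPath G M p m) (hSS' : Disjoint S S')
    (hS : ∀ v ∈ S, ¬ coveredBy M v) (hS' : ∀ v ∈ S', ¬ coveredBy M v) :
    Disjoint (Yseq G M S l) (Yseq G M S' l) := by
  rcases Nat.even_or_odd' l with ⟨k, rfl | rfl⟩
  · exact disjoint_Yseq_two_mul hdeg hM hSS' hS hS' k k
  refine Set.disjoint_left.2 fun x hx hx' => ?_
  by_cases hxM : coveredBy M x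
  · obtain ⟨_, hxy, y, rfl⟩ := hxM
    have hy : y ∈ Yseq G M S (2 * (k + 1)) := Yseq_two_mul_succ k ▸ ⟨x, hx, hxy⟩
    have hy' : y ∈ Yseq G M S' (2 * (k + 1)) := Yseq_two_mul_succ k ▸ ⟨x, hx', hxy⟩
    exact Set.disjoint_left.1 (disjoint_Yseq_two_mul hdeg hM hSS' hS hS' _ _) hy hy'
  · obtain ⟨p, m, hm, hp⟩ : ∃ p, ∃ m ≤ 2 * k + 1, isAugPath G M p m := by
      by_cases hxS : x ∈ S
      · exact exists_isAugPath_of_mem_Yseq hdeg hM hS' (Set.disjoint_left.1 hSS' hxS) hxM hx'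
      · exact exists_isAugPath_of_mem_Yseq hdeg hM hS hxS hxM hx
    exact hnoaug p m hm hp

end

/-- In a finite 2-regular bipartite graph with matching `M` having no augmenting
paths of length ≤ 2K+1 (K ≥ 2 even), if `v ≠ v'` are both uncovered, then `X_l(v)` and
`X_l(v')` are disjoint for every `l ≤ K`. -/
theorem stmt6 {V : Type*} [Fintype V] (G : SimpleGraph V) (M : Set (Sym2 V))
    (K : ℕ) (hK2 : 2 ≤ K) (hKeven : Even K)
    (hbip : isBipartite G)
    (hdeg : ∀ v : V, (G.neighborSet v).ncard = 2)
    (hM : isMatching G M)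
    (hnoaug : ∀ (p : ℕ → V) (l : ℕ), l ≤ 2 * K + 1 → ¬ isAugPath G M p l)
    (v v' : V) (hvv' : v ≠ v')
    (hv : ¬ coveredBy M v) (hv' : ¬ coveredBy M v') :
    ∀ l : ℕ, l ≤ K → Disjoint (Yseq G M {v} l) (Yseq G M {v'} l) := by
  intro l hl
  have hdeg' : ∀ v, (G.neighborSet v).encard ≤ 2 := fun v =>
    (Set.encard_eq_two.2 (Set.ncard_eq_two.1 (hdeg v))).le
  exact stmt6_general hdeg' hM (fun p m hm => hnoaug p m (by omega))
    (Set.disjoint_singleton.2 hvv') (by simpa using hv) (by simpa using hv')
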